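/- Let n ≥ 1, k ≥ 1, φ₁,…,φₙ ∈ ℝ^k and t ∈ ℝ^k. Assume the empirical covariance matrix C = (1/n)Σᵢφᵢφᵢᵀ − φ̄φ̄ᵀ (with φ̄ = (1/n)Σᵢφᵢ) is invertible, and that t = Σᵢ wᵢφᵢ for some weights wᵢ > 0 with Σᵢ wᵢ = 1. Then the function H(ξ) = log Z(ξ) − ⟨ξ,t⟩ attains its global minimum on ℝ^k, and the minimizer ξ(t) is unique. -/

import Mathlib

/-!
Subtracting `⟨ξ, t⟩` inside the exponentials turns `H` into the logarithm of
`∑ₐ pₐ exp uₐ` with `uₐ = ⟨φₐ - t, ξ⟩`, where `pₐ = 1 / n`. Since `t = ∑ₐ wₐ φₐ`, these `u` lie on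
the hyperplane `∑ₐ wₐ uₐ = 0`. A sublevel set of the sum bounds every `uₐ` from above and the
positive weights then bound every `uₐ` from below, so a minimizing `u` exists; strict convexity
of `exp` makes it unique. Finally `ξ ↦ u` is injective, because a direction `ξ` along which all
`⟨φₐ, ξ⟩` agree lies in the kernel of the covariance matrix.
-/

open Set Filter Bornology
open scoped Matrix

section PartitionFunction

variable {ι : Type*} [Fintype ι]

/-- The partition function of the exponents `u` with respect to the base weights `p`. The
partition function `Z(ξ)` of the vectors `φₐ` is the case `u a = ⟨φ a, ξ⟩`, `p a = 1 / n`. -/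
noncomputable def partitionFunction (p u : ι → ℝ) : ℝ :=
  ∑ a, p a * Real.exp (u a)

variable {p w : ι → ℝ}

theorem partitionFunction_pos [Nonempty ι] (hp : ∀ a, 0 < p a) (u : ι → ℝ) :
    0 < partitionFunction p u :=
  Finset.sum_pos (fun a _ => mul_pos (hp a) (Real.exp_pos _)) Finset.univ_nonempty

theorem partitionFunction_sub_const (p u : ι → ℝ) (c : ℝ) :
    partitionFunction p (fun a => u a - c) = partitionFunction p u / Real.exp c := by
  simp only [partitionFunction, Real.exp_sub, Finset.sum_div, mul_div_assoc]

theorem continuous_partitionFunction (p : ι → ℝ) : Continuous (partitionFunction p) := by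
  unfold partitionFunction
  fun_prop

theorem strictConvexOn_partitionFunction (hp : ∀ a, 0 < p a) :
    StrictConvexOn ℝ univ (partitionFunction p) := by
  have hexp (a : ι) : StrictConvexOn ℝ univ fun x => p a * Real.exp x := by
    refine ⟨convex_univ, fun x hx y hy hxy r s hr hs hrs => ?_⟩
    calc p a * Real.exp (r • x + s • y) < p a * (r • Real.exp x + s • Real.exp y) :=
          mul_lt_mul_of_pos_left (strictConvexOn_exp.2 hx hy hxy hr hs hrs) (hp a)
      _ = r • (p a * Real.exp x) + s • (p a * Real.exp y) := by
          simp only [smul_eq_mul]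
          ring
  refine ⟨convex_univ, fun u _ v _ huv r s hr hs hrs => ?_⟩
  obtain ⟨a, ha⟩ := Function.ne_iff.mp huv
  simp only [partitionFunction, Finset.smul_sum, ← Finset.sum_add_distrib]
  exact Finset.sum_lt_sum
    (fun b _ => (hexp b).convexOn.2 (mem_univ _) (mem_univ _) hr.le hs.le hrs)
    ⟨a, Finset.mem_univ a, (hexp a).2 (mem_univ _) (mem_univ _) ha hr hs hrs⟩

theorem le_div_of_partitionFunction_le (hp : ∀ a, 0 < p a) {u : ι → ℝ} {c : ℝ}
    (hu : partitionFunction p u ≤ c) (a : ι) : u a ≤ c / p a := by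
  rw [le_div_iff₀' (hp a)]
  calc p a * u a ≤ p a * Real.exp (u a) := by
        gcongr
        · exact (hp a).le
        · linarith [Real.add_one_le_exp (u a)]
    _ ≤ partitionFunction p u :=
        Finset.single_le_sum (f := fun b => p b * Real.exp (u b))
          (fun b _ => mul_nonneg (hp b).le (Real.exp_pos _).le) (Finset.mem_univ a)
    _ ≤ c := hu

theorem isBounded_setOf_le_and_dotProduct_nonneg (hw : ∀ a, 0 < w a) (M : ι → ℝ) :
    IsBounded {u : ι → ℝ | u ≤ M ∧ 0 ≤ w ⬝ᵥ u} := by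
  refine (Metric.isBounded_Icc (fun a => M a - (w ⬝ᵥ M) / w a) M).subset ?_
  rintro u ⟨huM, hwu⟩
  refine ⟨fun a => ?_, huM⟩
  have hgap : w a * (M a - u a) ≤ w ⬝ᵥ M :=
    calc w a * (M a - u a) ≤ w ⬝ᵥ (M - u) :=
          Finset.single_le_sum (f := fun b => w b * (M b - u b))
            (fun b _ => mul_nonneg (hw b).le (sub_nonneg.mpr (huM b))) (Finset.mem_univ a)
      _ = w ⬝ᵥ M - w ⬝ᵥ u := dotProduct_sub _ _ _
      _ ≤ w ⬝ᵥ M := sub_le_self _ hwu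
  exact sub_le_comm.mp ((le_div_iff₀' (hw a)).mpr hgap)

theorem exists_isMinOn_partitionFunction (hp : ∀ a, 0 < p a) (hw : ∀ a, 0 < w a)
    {S : Set (ι → ℝ)} (hS : IsClosed S) (hne : S.Nonempty) (hwS : ∀ u ∈ S, 0 ≤ w ⬝ᵥ u) :
    ∃ u ∈ S, IsMinOn (partitionFunction p) S u := by
  obtain ⟨u₀, hu₀⟩ := hne
  refine (continuous_partitionFunction p).continuousOn.exists_isMinOn' hS hu₀ ?_
  have hbdd := isBounded_setOf_le_and_dotProduct_nonneg hw fun a => partitionFunction p u₀ / p a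
  rw [← Metric.cobounded_eq_cocompact, eventually_inf_principal]
  filter_upwards [isBounded_def.mp hbdd] with u hu huS
  by_contra! hlt
  exact hu ⟨le_div_of_partitionFunction_le hp hlt.le, hwS u huS⟩

theorem existsUnique_forall_partitionFunction_map_le {E : Type*} [AddCommGroup E] [Module ℝ E]
    {L : E →ₗ[ℝ] ι → ℝ} (hL : Function.Injective L) (hp : ∀ a, 0 < p a) (hw : ∀ a, 0 < w a)
    (hwL : ∀ x, w ⬝ᵥ L x = 0) :
    ∃! x, ∀ y, partitionFunction p (L x) ≤ partitionFunction p (L y) := by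
  obtain ⟨_, ⟨x, rfl⟩, hx⟩ := exists_isMinOn_partitionFunction hp hw
    (Submodule.closed_of_finiteDimensional L.range) L.range.nonempty
    (by rintro _ ⟨x, rfl⟩; exact (hwL x).ge)
  refine ⟨x, fun y => hx ⟨y, rfl⟩, fun z hz => hL ?_⟩
  have hz_min : IsMinOn (partitionFunction p) L.range (L z) := by
    rintro _ ⟨y, rfl⟩
    exact hz y
  exact ((strictConvexOn_partitionFunction hp).subset (subset_univ _) L.range.convex).eq_of_isMinOn
    hz_min hx ⟨z, rfl⟩ ⟨x, rfl⟩

end PartitionFunction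

section WeightedCovariance

variable {ι κ : Type*} [Fintype ι]

/-- The covariance matrix `∑ₐ pₐ φₐ φₐᵀ - φ̄ φ̄ᵀ`, `φ̄ = ∑ₐ pₐ φₐ`, of the rows `φₐ` of `φ`, where
`φₐ` is taken with probability `pₐ`. -/
def weightedCovariance (p : ι → ℝ) (φ : Matrix ι κ ℝ) : Matrix κ κ ℝ :=
  ∑ a, p a • Matrix.vecMulVec (φ a) (φ a) - Matrix.vecMulVec (p ᵥ* φ) (p ᵥ* φ)

theorem weightedCovariance_const (c : ℝ) (φ : Matrix ι κ ℝ) :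
    weightedCovariance (fun _ => c) φ = Matrix.of fun i j =>
      c * ∑ a, φ a i * φ a j - (c * ∑ a, φ a i) * (c * ∑ a, φ a j) := by
  ext i j
  simp only [weightedCovariance, Matrix.sub_apply, Matrix.sum_apply, Matrix.smul_apply,
    Matrix.vecMulVec_apply, Matrix.vecMul, dotProduct, smul_eq_mul, ← Finset.mul_sum,
    Matrix.of_apply]

variable [Fintype κ]

theorem weightedCovariance_mulVec_eq_zero {p : ι → ℝ} {φ : Matrix ι κ ℝ}
    (hp1 : ∑ a, p a = 1) {ξ : κ → ℝ} {c : ℝ} (hξ : φ *ᵥ ξ = fun _ => c) :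
    weightedCovariance p φ *ᵥ ξ = 0 := by
  have hφ (a : ι) : φ a ⬝ᵥ ξ = c := congrFun hξ a
  have hmean : (p ᵥ* φ) ⬝ᵥ ξ = c := by
    rw [← Matrix.dotProduct_mulVec, hξ]
    simp only [dotProduct, ← Finset.sum_mul, hp1, one_mul]
  calc weightedCovariance p φ *ᵥ ξ = ∑ a, p a • c • φ a - c • (p ᵥ* φ) := by
        simp only [weightedCovariance, Matrix.sub_mulVec, Matrix.sum_mulVec, Matrix.smul_mulVec,
          Matrix.vecMulVec_mulVec, op_smul_eq_smul, hφ, hmean]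
    _ = 0 := by
        simp only [Matrix.vecMul_eq_sum, Finset.smul_sum, smul_comm c, sub_self]

end WeightedCovariance

section CenteredRows

variable {ι κ : Type*} [Fintype κ]

/-- The matrix whose rows are `φₐ - t`, where `φₐ` are the rows of `φ`. -/
def centeredRows (φ : Matrix ι κ ℝ) (t : κ → ℝ) : Matrix ι κ ℝ :=
  Matrix.of fun a => φ a - t

theorem centeredRows_mulVec (φ : Matrix ι κ ℝ) (t ξ : κ → ℝ) :
    centeredRows φ t *ᵥ ξ = fun a => (φ *ᵥ ξ) a - ξ ⬝ᵥ t := by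
  ext a
  rw [dotProduct_comm ξ t]
  exact sub_dotProduct _ _ _

variable [Fintype ι] {p w : ι → ℝ} {φ : Matrix ι κ ℝ} {t : κ → ℝ}

theorem dotProduct_centeredRows_mulVec_eq_zero (hw1 : ∑ a, w a = 1) (ht : t = w ᵥ* φ)
    (ξ : κ → ℝ) : w ⬝ᵥ centeredRows φ t *ᵥ ξ = 0 := by
  have hmean : w ⬝ᵥ φ *ᵥ ξ = ξ ⬝ᵥ t := by
    rw [Matrix.dotProduct_mulVec, ← ht, dotProduct_comm]
  simp only [centeredRows_mulVec, dotProduct, mul_sub, Finset.sum_sub_distrib, ← Finset.sum_mul,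
    hw1, one_mul] at hmean ⊢
  exact sub_eq_zero.mpr hmean

theorem centeredRows_mulVecLin_injective [DecidableEq κ] (hp1 : ∑ a, p a = 1)
    (hC : IsUnit (weightedCovariance p φ)) (t : κ → ℝ) :
    Function.Injective (centeredRows φ t).mulVecLin := by
  refine (injective_iff_map_eq_zero _).mpr fun ξ hξ => ?_
  rw [Matrix.mulVecLin_apply, centeredRows_mulVec] at hξ
  refine Matrix.mulVec_injective_of_isUnit hC ?_
  rw [Matrix.mulVec_zero]
  exact weightedCovariance_mulVec_eq_zero hp1 (funext fun a => sub_eq_zero.mp (congrFun hξ a))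

end CenteredRows

section TiltedLogPartition

variable {ι κ : Type*} [Fintype ι] [Fintype κ]

/-- The objective `H(ξ) = log Z(ξ) - ⟨ξ, t⟩`, where the rows of `φ` are the vectors `φₐ` and
`Z` is formed with arbitrary base weights `p` in place of the uniform weights `1 / n`. -/
noncomputable def tiltedLogPartition (p : ι → ℝ) (φ : Matrix ι κ ℝ) (t ξ : κ → ℝ) : ℝ :=
  Real.log (partitionFunction p (φ *ᵥ ξ)) - ξ ⬝ᵥ t

theorem tiltedLogPartition_const (c : ℝ) (φ : Matrix ι κ ℝ) (t ξ : κ → ℝ) :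
    tiltedLogPartition (fun _ => c) φ t ξ =
      Real.log (c * ∑ a, Real.exp (∑ j, φ a j * ξ j)) - ∑ j, ξ j * t j := by
  simp only [tiltedLogPartition, partitionFunction, Matrix.mulVec, dotProduct, ← Finset.mul_sum]

theorem tiltedLogPartition_eq_log [Nonempty ι] {p : ι → ℝ} (hp : ∀ a, 0 < p a)
    (φ : Matrix ι κ ℝ) (t ξ : κ → ℝ) :
    tiltedLogPartition p φ t ξ = Real.log (partitionFunction p (centeredRows φ t *ᵥ ξ)) := by
  rw [centeredRows_mulVec, partitionFunction_sub_const,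
    Real.log_div (partitionFunction_pos hp _).ne' (Real.exp_ne_zero _), Real.log_exp,
    tiltedLogPartition]

end TiltedLogPartition

theorem H_has_unique_global_minimizer_general {ι κ : Type*} [Fintype ι] [Fintype κ]
    [DecidableEq κ] (φ : Matrix ι κ ℝ) (t : κ → ℝ) {p w : ι → ℝ} (hp : ∀ a, 0 < p a)
    (hp1 : ∑ a, p a = 1) (hC : IsUnit (weightedCovariance p φ)) (hw : ∀ a, 0 < w a)
    (hw1 : ∑ a, w a = 1) (ht : t = w ᵥ* φ) :
    ∃! ξt, ∀ ξ, tiltedLogPartition p φ t ξt ≤ tiltedLogPartition p φ t ξ := by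
  have : Nonempty ι := Finset.univ_nonempty_iff.mp <|
    Finset.nonempty_of_sum_ne_zero (hw1.trans_ne one_ne_zero)
  simp only [tiltedLogPartition_eq_log hp,
    Real.log_le_log_iff (partitionFunction_pos hp _) (partitionFunction_pos hp _)]
  exact existsUnique_forall_partitionFunction_map_le (centeredRows_mulVecLin_injective hp1 hC t)
    hp hw (dotProduct_centeredRows_mulVec_eq_zero hw1 ht)

/-- if the empirical covariance matrix of `φ₁,…,φₙ ∈ ℝ^k` is invertible and
`t` is a convex combination of the `φᵢ` with strictly positive weights, then
`H(ξ) = log Z(ξ) − ⟨ξ,t⟩` attains its global minimum on `ℝ^k` at a unique point. -/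
theorem H_has_unique_global_minimizer (n k : ℕ) (hn : 1 ≤ n) (hk : 1 ≤ k)
    (φ : Fin n → Fin k → ℝ) (t : Fin k → ℝ)
    (hC : IsUnit (Matrix.of (fun i j : Fin k =>
      (1 / n : ℝ) * ∑ a, φ a i * φ a j -
        ((1 / n : ℝ) * ∑ a, φ a i) * ((1 / n : ℝ) * ∑ a, φ a j))))
    (w : Fin n → ℝ) (hw : ∀ i, 0 < w i) (hw1 : ∑ i, w i = 1)
    (ht : ∀ j, t j = ∑ i, w i * φ i j) :
    ∃! ξt : Fin k → ℝ, ∀ ξ : Fin k → ℝ,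
      (Real.log ((1 / n : ℝ) * ∑ a, Real.exp (∑ j, φ a j * ξt j)) - ∑ j, ξt j * t j)
        ≤ (Real.log ((1 / n : ℝ) * ∑ a, Real.exp (∑ j, φ a j * ξ j)) - ∑ j, ξ j * t j) := by
  simpa only [tiltedLogPartition_const, Matrix.of_apply] using
    H_has_unique_global_minimizer_general (Matrix.of φ) t (p := fun _ => 1 / n)
      (fun _ => by positivity) (by simp [Nat.ne_of_gt hn])
      ((weightedCovariance_const _ (Matrix.of φ)).symm ▸ hC) hw hw1 (funext ht)
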